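/- Let A = (A_1,A_2,A_3,A_4) be a connection on ℝ⁴ (smooth anti-Hermitian matrix-valued maps). Then the anti-self-dual Yang–Mills equations with respect to the split metric dx₁²+dx₂²−dx₃²−dx₄², namely F_{12} = F_{34}, F_{13} = −F_{42}, F_{14} = −F_{23} everywhere, hold if and only if for every μ ∈ ℂ∖{0} the operators ∇_w̄ + μ∇_z and ∇_w + μ⁻¹∇_z̄ commute, i.e. (∇_w̄ + μ∇_z)((∇_w + μ⁻¹∇_z̄)E) = (∇_w + μ⁻¹∇_z̄)((∇_w̄ + μ∇_z)E) for every smooth map E : ℝ⁴ → M_n(ℂ). -/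

import Mathlib

open Matrix Complex
open scoped Matrix ComplexConjugate

attribute [local instance] Matrix.normedAddCommGroup Matrix.normedSpace

noncomputable section

/-- `n × n` complex matrices. -/
abbrev Mat (n : ℕ) := Matrix (Fin n) (Fin n) ℂ

/-- `ℝ⁴` with coordinates `(x₁, x₂, x₃, x₄)`. -/
abbrev P4 : Type := ℝ × ℝ × ℝ × ℝ

/-- Partial derivative in `x₁`. -/
def pd1 {n : ℕ} (f : P4 → Mat n) (p : P4) : Mat n :=
  deriv (fun s => f (s, p.2.1, p.2.2.1, p.2.2.2)) p.1

/-- Partial derivative in `x₂`. -/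
def pd2 {n : ℕ} (f : P4 → Mat n) (p : P4) : Mat n :=
  deriv (fun s => f (p.1, s, p.2.2.1, p.2.2.2)) p.2.1

/-- Partial derivative in `x₃`. -/
def pd3 {n : ℕ} (f : P4 → Mat n) (p : P4) : Mat n :=
  deriv (fun s => f (p.1, p.2.1, s, p.2.2.2)) p.2.2.1

/-- Partial derivative in `x₄`. -/
def pd4 {n : ℕ} (f : P4 → Mat n) (p : P4) : Mat n :=
  deriv (fun s => f (p.1, p.2.1, p.2.2.1, s)) p.2.2.2

/-- Covariant derivative `∇E = ∂E − A·E` in the direction corresponding to `pd`. -/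
def nab {n : ℕ} (pd : (P4 → Mat n) → P4 → Mat n) (A : P4 → Mat n)
    (E : P4 → Mat n) (p : P4) : Mat n :=
  pd E p - A p * E p

/-- Curvature component `F_{ij} = −∂_{x_i}A_j + ∂_{x_j}A_i + [A_i, A_j]`. -/
def curv {n : ℕ} (pdi pdj : (P4 → Mat n) → P4 → Mat n) (Ai Aj : P4 → Mat n)
    (p : P4) : Mat n :=
  -(pdi Aj p) + pdj Ai p + (Ai p * Aj p - Aj p * Ai p)

/-- `∇_z = ½(∇₁ − i∇₂)`. -/
def nabz {n : ℕ} (A1 A2 E : P4 → Mat n) (p : P4) : Mat n :=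
  (2⁻¹ : ℂ) • (nab pd1 A1 E p - Complex.I • nab pd2 A2 E p)

/-- `∇_z̄ = ½(∇₁ + i∇₂)`. -/
def nabzbar {n : ℕ} (A1 A2 E : P4 → Mat n) (p : P4) : Mat n :=
  (2⁻¹ : ℂ) • (nab pd1 A1 E p + Complex.I • nab pd2 A2 E p)

/-- `∇_w = ½(∇₃ − i∇₄)`. -/
def nabw {n : ℕ} (A3 A4 E : P4 → Mat n) (p : P4) : Mat n :=
  (2⁻¹ : ℂ) • (nab pd3 A3 E p - Complex.I • nab pd4 A4 E p)

/-- `∇_w̄ = ½(∇₃ + i∇₄)`. -/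
def nabwbar {n : ℕ} (A3 A4 E : P4 → Mat n) (p : P4) : Mat n :=
  (2⁻¹ : ℂ) • (nab pd3 A3 E p + Complex.I • nab pd4 A4 E p)

/-- The operator `∇_w̄ + μ∇_z`. -/
def DOne {n : ℕ} (A1 A2 A3 A4 : P4 → Mat n) (μ : ℂ) (E : P4 → Mat n) : P4 → Mat n :=
  fun p => nabwbar A3 A4 E p + μ • nabz A1 A2 E p

/-- The operator `∇_w + μ⁻¹∇_z̄` (split signature). -/
def DTwoSplit {n : ℕ} (A1 A2 A3 A4 : P4 → Mat n) (μ : ℂ) (E : P4 → Mat n) : P4 → Mat n :=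
  fun p => nabw A3 A4 E p + μ⁻¹ • nabzbar A1 A2 E p

/-! Each operator of the pair is a constant combination `∑ cᵢ∇ᵢ` of the covariant derivatives, and
`[∇ᵢ, ∇ⱼ]` is multiplication by `Fᵢⱼ`; the commutator of the pair is therefore multiplication by a
combination of the curvature components. As a function of `μ` that combination is a Laurent
polynomial with terms `1`, `μ`, `μ⁻¹`, which vanishes for all `μ ≠ 0` iff its three coefficients do,
and these are invertible combinations of the three equations. Taking `E = 1` shows that the
commutator determines the matrix it multiplies by. -/

section FDeriv

variable {V F m : Type*} [NormedAddCommGroup V] [NormedSpace ℝ V] [NormedAddCommGroup F]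
  [NormedSpace ℝ F] [Fintype m]

-- `Matrix.normedAddCommGroup` is the entrywise sup norm, for which matrices are not a normed ring,
-- so the product rule is derived from bilinearity in finite dimension.
lemma hasFDerivAt_matrix_mul {f g : V → Matrix m m ℂ} {p : V} (hf : DifferentiableAt ℝ f p)
    (hg : DifferentiableAt ℝ g p) :
    HasFDerivAt (fun q => f q * g q)
      ((LinearMap.mul ℝ (Matrix m m ℂ)).toContinuousBilinearMap.precompR V (f p) (fderiv ℝ g p) +
        (LinearMap.mul ℝ (Matrix m m ℂ)).toContinuousBilinearMap.precompL V (fderiv ℝ f p) (g p))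
      p :=
  (LinearMap.mul ℝ (Matrix m m ℂ)).toContinuousBilinearMap.hasFDerivAt_of_bilinear
    hf.hasFDerivAt hg.hasFDerivAt

lemma fderiv_sum_smul_apply {ι R : Type*} [Fintype ι] [Monoid R] [DistribMulAction R F]
    [SMulCommClass ℝ R F] [ContinuousConstSMul R F] (c : ι → R) {f : ι → V → F} {p : V}
    (hf : ∀ j, DifferentiableAt ℝ (f j) p) (v : V) :
    fderiv ℝ (fun q => ∑ j, c j • f j q) p v = ∑ j, c j • fderiv ℝ (f j) p v := by
  rw [fderiv_fun_sum fun j _ => (hf j).fun_const_smul (c j), _root_.sum_apply]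
  simp only [fderiv_fun_const_smul (hf _), _root_.smul_apply]

lemma differentiable_fderiv_apply {f : V → F} (hf : ContDiff ℝ 2 f) (v : V) :
    Differentiable ℝ fun p => fderiv ℝ f p v :=
  ((hf.fderiv_right (m := 1) (by norm_num)).differentiable one_ne_zero).clm_apply
    (differentiable_const v)

lemma fderiv_fderiv_apply_comm {f : V → F} (hf : ContDiff ℝ 2 f) (v w p : V) :
    fderiv ℝ (fun q => fderiv ℝ f q w) p v = fderiv ℝ (fun q => fderiv ℝ f q v) p w := by
  have hf' : DifferentiableAt ℝ (fderiv ℝ f) p :=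
    (hf.fderiv_right (m := 1) (by norm_num)).differentiable one_ne_zero p
  have hsymm : IsSymmSndFDerivAt ℝ f p := hf.contDiffAt.isSymmSndFDerivAt (by simp)
  have second_derivative (x y : V) :
      fderiv ℝ (fun q => fderiv ℝ f q y) p x = fderiv ℝ (fderiv ℝ f) p x y := by
    simp [fderiv_clm_apply hf' (differentiableAt_const y)]
  rw [second_derivative, second_derivative, hsymm v w]

end FDeriv

lemma laurent_eq_zero_iff {K M : Type*} [Field K] [CharZero K] [AddCommGroup M] [Module K M]
    {a b c : M} :
    (∀ μ : K, μ ≠ 0 → a + μ • b + μ⁻¹ • c = 0) ↔ a = 0 ∧ b = 0 ∧ c = 0 := by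
  refine ⟨fun h => ?_, by rintro ⟨rfl, rfl, rfl⟩; simp⟩
  have at_one := h 1 one_ne_zero
  have at_neg_one := h (-1) (neg_ne_zero.mpr one_ne_zero)
  have at_two := h 2 two_ne_zero
  rw [inv_one] at at_one
  rw [inv_neg_one] at at_neg_one
  refine ⟨?_, ?_, ?_⟩
  · linear_combination (norm := module) (2⁻¹ : K) • at_one + (2⁻¹ : K) • at_neg_one
  · linear_combination (norm := module)
      (2 / 3 : K) • at_two - (1 / 2 : K) • at_one - (1 / 6 : K) • at_neg_one
  · linear_combination (norm := module)
      at_one - (2 / 3 : K) • at_two - (1 / 3 : K) • at_neg_one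

lemma sub_I_smul_eq_zero_and_add_I_smul_eq_zero_iff {M : Type*} [AddCommGroup M] [Module ℂ M]
    {x y : M} : (x - I • y = 0 ∧ x + I • y = 0) ↔ (x = 0 ∧ y = 0) := by
  refine ⟨fun ⟨hsub, hadd⟩ => ⟨?_, ?_⟩, by rintro ⟨rfl, rfl⟩; simp⟩
  · linear_combination (norm := module) (1 / 2 : ℂ) • hsub + (1 / 2 : ℂ) • hadd
  · have hIy : I • y = 0 := by
      linear_combination (norm := module) (1 / 2 : ℂ) • hadd - (1 / 2 : ℂ) • hsub
    exact (smul_eq_zero_iff_right I_ne_zero).mp hIy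

variable {n : ℕ}

/-- The coordinate directions of `ℝ⁴`; index `i` is the direction of `x_{i+1}`. -/
def coordVec : Fin 4 → P4 := ![(1, 0, 0, 0), (0, 1, 0, 0), (0, 0, 1, 0), (0, 0, 0, 1)]

/-- The partial derivatives `pd1, …, pd4` as one family, so that sums over directions can be
written; index `i` is the derivative in `x_{i+1}`. -/
def coordDeriv : Fin 4 → (P4 → Mat n) → P4 → Mat n := ![pd1, pd2, pd3, pd4]

section CoordDeriv

variable {f g : P4 → Mat n} {p : P4}

lemma coordDeriv_eq_of_hasFDerivAt (i : Fin 4) {f' : P4 →L[ℝ] Mat n} (hf : HasFDerivAt f f' p) :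
    coordDeriv i f p = f' (coordVec i) := by
  have along_curve {γ : ℝ → P4} {v : P4} {t : ℝ} (hγ : HasDerivAt γ v t) (hp : p = γ t) :
      deriv (f ∘ γ) t = f' v :=
    (hf.comp_hasDerivAt_of_eq t hγ hp).deriv
  have hid (t : ℝ) := hasDerivAt_id' t
  have hconst (t x : ℝ) := hasDerivAt_const t x
  fin_cases i
  · exact along_curve ((hid _).prodMk ((hconst _ _).prodMk ((hconst _ _).prodMk (hconst _ _)))) rfl
  · exact along_curve ((hconst _ _).prodMk ((hid _).prodMk ((hconst _ _).prodMk (hconst _ _)))) rfl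
  · exact along_curve ((hconst _ _).prodMk ((hconst _ _).prodMk ((hid _).prodMk (hconst _ _)))) rfl
  · exact along_curve ((hconst _ _).prodMk ((hconst _ _).prodMk ((hconst _ _).prodMk (hid _)))) rfl

lemma coordDeriv_eq_fderiv (i : Fin 4) (hf : DifferentiableAt ℝ f p) :
    coordDeriv i f p = fderiv ℝ f p (coordVec i) :=
  coordDeriv_eq_of_hasFDerivAt i hf.hasFDerivAt

lemma coordDeriv_eq_fderiv_fun (i : Fin 4) (hf : Differentiable ℝ f) :
    coordDeriv i f = fun p => fderiv ℝ f p (coordVec i) :=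
  funext fun p => coordDeriv_eq_fderiv i (hf p)

lemma differentiable_coordDeriv (i : Fin 4) (hf : ContDiff ℝ 2 f) :
    Differentiable ℝ (coordDeriv i f) := by
  rw [coordDeriv_eq_fderiv_fun i (hf.differentiable two_ne_zero)]
  exact differentiable_fderiv_apply hf _

lemma coordDeriv_comm (i j : Fin 4) (hf : ContDiff ℝ 2 f) (p : P4) :
    coordDeriv i (coordDeriv j f) p = coordDeriv j (coordDeriv i f) p := by
  rw [coordDeriv_eq_fderiv i (differentiable_coordDeriv j hf p),
    coordDeriv_eq_fderiv j (differentiable_coordDeriv i hf p),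
    coordDeriv_eq_fderiv_fun i (hf.differentiable two_ne_zero),
    coordDeriv_eq_fderiv_fun j (hf.differentiable two_ne_zero)]
  exact fderiv_fderiv_apply_comm hf _ _ p

lemma coordDeriv_sub (i : Fin 4) (hf : DifferentiableAt ℝ f p) (hg : DifferentiableAt ℝ g p) :
    coordDeriv i (fun q => f q - g q) p = coordDeriv i f p - coordDeriv i g p := by
  rw [coordDeriv_eq_fderiv i hf, coordDeriv_eq_fderiv i hg]
  exact coordDeriv_eq_of_hasFDerivAt i (hf.hasFDerivAt.fun_sub hg.hasFDerivAt)

lemma coordDeriv_mul (i : Fin 4) (hf : DifferentiableAt ℝ f p) (hg : DifferentiableAt ℝ g p) :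
    coordDeriv i (fun q => f q * g q) p = coordDeriv i f p * g p + f p * coordDeriv i g p := by
  rw [coordDeriv_eq_fderiv i hf, coordDeriv_eq_fderiv i hg, add_comm]
  exact coordDeriv_eq_of_hasFDerivAt i (hasFDerivAt_matrix_mul hf hg)

lemma coordDeriv_sum_smul {ι : Type*} [Fintype ι] (i : Fin 4) (c : ι → ℂ) {f : ι → P4 → Mat n}
    (hf : ∀ j, DifferentiableAt ℝ (f j) p) :
    coordDeriv i (fun q => ∑ j, c j • f j q) p = ∑ j, c j • coordDeriv i (f j) p := by
  rw [coordDeriv_eq_fderiv i (.fun_sum fun j _ => (hf j).fun_const_smul (c j))]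
  simp only [coordDeriv_eq_fderiv i (hf _)]
  exact fderiv_sum_smul_apply c hf (coordVec i)

end CoordDeriv

section Curvature

variable {A B E : P4 → Mat n}

lemma nab_sum_smul {ι : Type*} [Fintype ι] (i : Fin 4) (c : ι → ℂ) {f : ι → P4 → Mat n} {p : P4}
    (hf : ∀ j, DifferentiableAt ℝ (f j) p) :
    nab (coordDeriv i) A (fun q => ∑ j, c j • f j q) p =
      ∑ j, c j • nab (coordDeriv i) A (f j) p := by
  simp only [nab, coordDeriv_sum_smul i c hf, Finset.mul_sum, mul_smul_comm, smul_sub,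
    Finset.sum_sub_distrib]

lemma differentiable_nab (i : Fin 4) (hA : Differentiable ℝ A) (hE : ContDiff ℝ 2 E) :
    Differentiable ℝ (nab (coordDeriv i) A E) := fun p =>
  (differentiable_coordDeriv i hE p).sub
    (hasFDerivAt_matrix_mul (hA p) (hE.differentiable two_ne_zero p)).differentiableAt

lemma nab_nab (i j : Fin 4) (hB : Differentiable ℝ B) (hE : ContDiff ℝ 2 E) (p : P4) :
    nab (coordDeriv i) A (nab (coordDeriv j) B E) p =
      coordDeriv i (coordDeriv j E) p - (coordDeriv i B p * E p + B p * coordDeriv i E p) -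
        A p * (coordDeriv j E p - B p * E p) := by
  have hE' := hE.differentiable two_ne_zero p
  rw [← coordDeriv_mul i (hB p) hE', ← coordDeriv_sub i (differentiable_coordDeriv j hE p)
    (hasFDerivAt_matrix_mul (hB p) hE').differentiableAt]
  rfl

lemma nab_nab_sub_nab_nab (i j : Fin 4) (hA : Differentiable ℝ A) (hB : Differentiable ℝ B)
    (hE : ContDiff ℝ 2 E) (p : P4) :
    nab (coordDeriv i) A (nab (coordDeriv j) B E) p -
        nab (coordDeriv j) B (nab (coordDeriv i) A E) p =
      curv (coordDeriv i) (coordDeriv j) A B p * E p := by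
  rw [nab_nab i j hB hE, nab_nab j i hA hE, coordDeriv_comm i j hE, curv]
  noncomm_ring

lemma curv_self (pd : (P4 → Mat n) → P4 → Mat n) (A : P4 → Mat n) (p : P4) :
    curv pd pd A A p = 0 := by
  simp [curv]

lemma curv_swap (pd pd' : (P4 → Mat n) → P4 → Mat n) (A B : P4 → Mat n) (p : P4) :
    curv pd' pd B A p = -curv pd pd' A B p := by
  simp only [curv]
  abel

end Curvature

/-- The covariant derivative `∑ cᵢ∇ᵢ` along the constant complex vector field with components `c`,
for the connection with components `A`. -/
def covDeriv (A : Fin 4 → P4 → Mat n) (c : Fin 4 → ℂ) (E : P4 → Mat n) : P4 → Mat n :=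
  fun p => ∑ i, c i • nab (coordDeriv i) (A i) E p

/-- The curvature `F(c, d) = ∑ cᵢdⱼFᵢⱼ`, extended complex bilinearly to complex vectors. -/
def curvForm (A : Fin 4 → P4 → Mat n) (c d : Fin 4 → ℂ) (p : P4) : Mat n :=
  ∑ i, ∑ j, (c i * d j) • curv (coordDeriv i) (coordDeriv j) (A i) (A j) p

lemma covDeriv_covDeriv {A : Fin 4 → P4 → Mat n} {E : P4 → Mat n}
    (hA : ∀ i, Differentiable ℝ (A i)) (hE : ContDiff ℝ 2 E) (c d : Fin 4 → ℂ) (p : P4) :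
    covDeriv A c (covDeriv A d E) p = ∑ i, ∑ j,
      (c i * d j) • nab (coordDeriv i) (A i) (nab (coordDeriv j) (A j) E) p := by
  refine Finset.sum_congr rfl fun i _ => ?_
  unfold covDeriv
  rw [nab_sum_smul i d fun j => differentiable_nab j (hA j) hE p, Finset.smul_sum]
  simp only [smul_smul]

lemma covDeriv_covDeriv_sub_covDeriv_covDeriv {A : Fin 4 → P4 → Mat n} {E : P4 → Mat n}
    (hA : ∀ i, Differentiable ℝ (A i)) (hE : ContDiff ℝ 2 E) (c d : Fin 4 → ℂ) (p : P4) :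
    covDeriv A c (covDeriv A d E) p - covDeriv A d (covDeriv A c E) p =
      curvForm A c d p * E p := by
  rw [covDeriv_covDeriv hA hE, covDeriv_covDeriv hA hE, curvForm]
  nth_rw 2 [Finset.sum_comm]
  simp only [← Finset.sum_sub_distrib, Finset.sum_mul, smul_mul_assoc,
    ← nab_nab_sub_nab_nab _ _ (hA _) (hA _) hE, smul_sub, mul_comm (d _)]

section LaxPair

variable (A1 A2 A3 A4 : P4 → Mat n)

lemma DOne_eq_covDeriv (μ : ℂ) (E : P4 → Mat n) :
    DOne A1 A2 A3 A4 μ E =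
      covDeriv ![A1, A2, A3, A4] ![μ / 2, -(μ * I / 2), 1 / 2, I / 2] E := by
  funext p
  simp only [DOne, nabwbar, nabz, covDeriv, coordDeriv, Fin.sum_univ_four, Matrix.cons_val]
  module

lemma DTwoSplit_eq_covDeriv (μ : ℂ) (E : P4 → Mat n) :
    DTwoSplit A1 A2 A3 A4 μ E =
      covDeriv ![A1, A2, A3, A4] ![μ⁻¹ / 2, μ⁻¹ * I / 2, 1 / 2, -(I / 2)] E := by
  funext p
  simp only [DTwoSplit, nabw, nabzbar, covDeriv, coordDeriv, Fin.sum_univ_four, Matrix.cons_val]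
  module

/-- The matrix by which the commutator of `∇_w̄ + μ∇_z` and `∇_w + μ⁻¹∇_z̄` multiplies, as a Laurent
polynomial in `μ`. -/
def laxCurv (μ : ℂ) (p : P4) : Mat n :=
  (1 / 4 : ℂ) • ((2 * I) • (curv pd1 pd2 A1 A2 p - curv pd3 pd4 A3 A4 p) +
    μ • ((curv pd1 pd3 A1 A3 p + curv pd4 pd2 A4 A2 p) -
      I • (curv pd1 pd4 A1 A4 p + curv pd2 pd3 A2 A3 p)) +
    μ⁻¹ • -((curv pd1 pd3 A1 A3 p + curv pd4 pd2 A4 A2 p) +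
      I • (curv pd1 pd4 A1 A4 p + curv pd2 pd3 A2 A3 p)))

lemma curvForm_lax_pair {μ : ℂ} (hμ : μ ≠ 0) (p : P4) :
    curvForm ![A1, A2, A3, A4] ![μ / 2, -(μ * I / 2), 1 / 2, I / 2]
        ![μ⁻¹ / 2, μ⁻¹ * I / 2, 1 / 2, -(I / 2)] p =
      laxCurv A1 A2 A3 A4 μ p := by
  simp only [curvForm, laxCurv, coordDeriv, Fin.sum_univ_four, Matrix.cons_val, curv_self,
    curv_swap pd1 pd2, curv_swap pd1 pd3, curv_swap pd1 pd4, curv_swap pd2 pd3,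
    curv_swap pd4 pd2, curv_swap pd3 pd4]
  match_scalars <;> field_simp <;> ring_nf
  rw [I_sq]
  ring

lemma forall_laxCurv_eq_zero_iff (p : P4) :
    (∀ μ : ℂ, μ ≠ 0 → laxCurv A1 A2 A3 A4 μ p = 0) ↔
      curv pd1 pd2 A1 A2 p = curv pd3 pd4 A3 A4 p ∧
      curv pd1 pd3 A1 A3 p = -(curv pd4 pd2 A4 A2 p) ∧
      curv pd1 pd4 A1 A4 p = -(curv pd2 pd3 A2 A3 p) := by
  have quarter_ne_zero : (1 / 4 : ℂ) ≠ 0 := by norm_num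
  have two_I_ne_zero : 2 * I ≠ 0 := mul_ne_zero two_ne_zero I_ne_zero
  simp only [laxCurv, smul_eq_zero_iff_right quarter_ne_zero]
  rw [laurent_eq_zero_iff, smul_eq_zero_iff_right two_I_ne_zero, neg_eq_zero,
    sub_I_smul_eq_zero_and_add_I_smul_eq_zero_iff, sub_eq_zero, ← eq_neg_iff_add_eq_zero,
    ← eq_neg_iff_add_eq_zero]

variable {A1 A2 A3 A4}

lemma DOne_DTwoSplit_sub_DTwoSplit_DOne (h1 : Differentiable ℝ A1) (h2 : Differentiable ℝ A2)
    (h3 : Differentiable ℝ A3) (h4 : Differentiable ℝ A4) {E : P4 → Mat n} (hE : ContDiff ℝ 2 E)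
    {μ : ℂ} (hμ : μ ≠ 0) (p : P4) :
    DOne A1 A2 A3 A4 μ (DTwoSplit A1 A2 A3 A4 μ E) p -
        DTwoSplit A1 A2 A3 A4 μ (DOne A1 A2 A3 A4 μ E) p =
      laxCurv A1 A2 A3 A4 μ p * E p := by
  have hA : ∀ i, Differentiable ℝ (![A1, A2, A3, A4] i) := by
    simp [Fin.forall_fin_succ, h1, h2, h3, h4]
  simp only [DOne_eq_covDeriv, DTwoSplit_eq_covDeriv, ← curvForm_lax_pair A1 A2 A3 A4 hμ,
    covDeriv_covDeriv_sub_covDeriv_covDeriv hA hE]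

end LaxPair

theorem asdym_split_lax_general {n : ℕ} {k : WithTop ℕ∞} (hk : 2 ≤ k) {A1 A2 A3 A4 : P4 → Mat n}
    (h1 : Differentiable ℝ A1) (h2 : Differentiable ℝ A2)
    (h3 : Differentiable ℝ A3) (h4 : Differentiable ℝ A4) :
    (∀ p : P4,
        curv pd1 pd2 A1 A2 p = curv pd3 pd4 A3 A4 p ∧
        curv pd1 pd3 A1 A3 p = -(curv pd4 pd2 A4 A2 p) ∧
        curv pd1 pd4 A1 A4 p = -(curv pd2 pd3 A2 A3 p)) ↔
      (∀ μ : ℂ, μ ≠ 0 → ∀ E : P4 → Mat n, ContDiff ℝ k E → ∀ p : P4,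
        DOne A1 A2 A3 A4 μ (DTwoSplit A1 A2 A3 A4 μ E) p =
          DTwoSplit A1 A2 A3 A4 μ (DOne A1 A2 A3 A4 μ E) p) := by
  simp only [← forall_laxCurv_eq_zero_iff]
  constructor
  · intro hcurv μ hμ E hE p
    rw [← sub_eq_zero, DOne_DTwoSplit_sub_DTwoSplit_DOne h1 h2 h3 h4 (hE.of_le hk) hμ,
      hcurv p μ hμ, zero_mul]
  · intro hcomm p μ hμ
    rw [← mul_one (laxCurv A1 A2 A3 A4 μ p),
      ← DOne_DTwoSplit_sub_DTwoSplit_DOne h1 h2 h3 h4 (E := fun _ => 1) contDiff_const hμ,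
      hcomm μ hμ _ contDiff_const, sub_self]

/-- The anti-self-dual Yang–Mills equations on `ℝ^{2,2}`,
`F₁₂ = F₃₄`, `F₁₃ = −F₄₂`, `F₁₄ = −F₂₃`, hold iff for every `μ ∈ ℂ∖{0}` the operators
`∇_w̄ + μ∇_z` and `∇_w + μ⁻¹∇_z̄` commute on all smooth maps `E : ℝ⁴ → Mₙ(ℂ)`. -/
theorem asdym_split_lax {n : ℕ} (A1 A2 A3 A4 : P4 → Mat n)
    (h1s : ContDiff ℝ (⊤ : ℕ∞) A1) (h2s : ContDiff ℝ (⊤ : ℕ∞) A2)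
    (h3s : ContDiff ℝ (⊤ : ℕ∞) A3) (h4s : ContDiff ℝ (⊤ : ℕ∞) A4)
    (h1a : ∀ p : P4, (A1 p)ᴴ = -(A1 p)) (h2a : ∀ p : P4, (A2 p)ᴴ = -(A2 p))
    (h3a : ∀ p : P4, (A3 p)ᴴ = -(A3 p)) (h4a : ∀ p : P4, (A4 p)ᴴ = -(A4 p)) :
    (∀ p : P4,
        curv pd1 pd2 A1 A2 p = curv pd3 pd4 A3 A4 p ∧
        curv pd1 pd3 A1 A3 p = -(curv pd4 pd2 A4 A2 p) ∧
        curv pd1 pd4 A1 A4 p = -(curv pd2 pd3 A2 A3 p)) ↔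
      (∀ μ : ℂ, μ ≠ 0 → ∀ E : P4 → Mat n, ContDiff ℝ (⊤ : ℕ∞) E → ∀ p : P4,
        DOne A1 A2 A3 A4 μ (DTwoSplit A1 A2 A3 A4 μ E) p =
          DTwoSplit A1 A2 A3 A4 μ (DOne A1 A2 A3 A4 μ E) p) :=
  asdym_split_lax_general (WithTop.coe_le_coe.mpr le_top) (h1s.differentiable (by simp))
    (h2s.differentiable (by simp)) (h3s.differentiable (by simp)) (h4s.differentiable (by simp))
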